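/- arXiv:2605.27212 — 3 statements merged into one kernel-verified Lean document; each statement's English description precedes it below -/
import Mathlib

section
/- Let p be a prime and let U, V be unitary operators on a finite-dimensional complex Hilbert space with U^p = V^p = I. Suppose UV = ζ·VU for some p-th root of unity ζ ≠ 1. Let P_U = (1/p)·Σ_{a=0}^{p−1} U^a and P_V = (1/p)·Σ_{a=0}^{p−1} V^a (the orthogonal projections onto the fixed spaces of U and V). Then ‖P_U P_V‖_op ≤ p^{−1/2}. -/
open Finset

noncomputable section

/-!
Moving the powers of `V` to the left turns `(∑ b, U ^ b) * ∑ a, V ^ a` into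
`∑ a, V ^ a * ∑ b, ζ ^ (a * b) • U ^ b`. Applied to a vector `x`, the inner sums are the discrete
Fourier transform of `b ↦ U ^ b x`. Parseval's identity and the Cauchy–Schwarz inequality bound the
sum of their norms by `n * √n * ‖x‖`, and the factor `n⁻²` of the two averages leaves `n ^ (-1/2)`.
-/

section TwistedCommutation

variable {R A : Type*} [CommSemiring R] [Semiring A] [Algebra R A] {u v : A} {ζ : R}

theorem pow_mul_pow_of_mul_eq_smul_mul (huv : u * v = ζ • (v * u)) (b a : ℕ) :
    u ^ b * v ^ a = ζ ^ (a * b) • (v ^ a * u ^ b) := by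
  have semiconj_u : SemiconjBy u v (ζ • v) := by
    rw [SemiconjBy, huv, smul_mul_assoc]
  have semiconj_v_pow : SemiconjBy (v ^ a) (ζ ^ a • u) u := by
    rw [SemiconjBy, (semiconj_u.pow_right a).eq, smul_pow, mul_smul_comm, smul_mul_assoc]
  rw [← (semiconj_v_pow.pow_right b).eq, smul_pow, mul_smul_comm, pow_mul]

theorem sum_pow_mul_sum_pow_of_mul_eq_smul_mul (huv : u * v = ζ • (v * u)) (s t : Finset ℕ) :
    (∑ b ∈ s, u ^ b) * ∑ a ∈ t, v ^ a = ∑ a ∈ t, v ^ a * ∑ b ∈ s, ζ ^ (a * b) • u ^ b := by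
  rw [sum_mul_sum, sum_comm]
  simp only [mul_sum, mul_smul_comm, pow_mul_pow_of_mul_eq_smul_mul huv]

end TwistedCommutation

section DiscreteFourier

variable {𝕜 : Type*} [RCLike 𝕜] {n : ℕ} {ζ : 𝕜}

open scoped ComplexConjugate

theorem sum_conj_pow_mul_pow (hζ : IsPrimitiveRoot ζ n) {b c : ℕ} (hb : b < n) (hc : c < n) :
    ∑ a ∈ range n, conj (ζ ^ (a * b)) * ζ ^ (a * c) = if b = c then (n : 𝕜) else 0 := by
  have norm_ζ : ‖ζ‖ = 1 := (hζ.isOfFinOrder (by lia)).norm_eq_one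
  have conj_mul_self (k : ℕ) : conj (ζ ^ k) * ζ ^ k = 1 := by
    rw [RCLike.conj_mul, norm_pow, norm_ζ, one_pow, RCLike.ofReal_one, one_pow]
  have geometric (a : ℕ) : conj (ζ ^ (a * b)) * ζ ^ (a * c) = (conj (ζ ^ b) * ζ ^ c) ^ a := by
    rw [mul_pow, ← map_pow, ← pow_mul, ← pow_mul, mul_comm b, mul_comm c]
  simp only [geometric]
  split_ifs with hbc
  · simp only [hbc, conj_mul_self, one_pow, sum_const, card_range, nsmul_one]
  · have ratio_ne_one : conj (ζ ^ b) * ζ ^ c ≠ 1 := fun h ↦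
      hbc <| hζ.pow_inj hb hc <| (mul_left_cancel₀
        (left_ne_zero_of_mul_eq_one h) (h.trans (conj_mul_self b).symm)).symm
    have ratio_pow : (conj (ζ ^ b) * ζ ^ c) ^ n = 1 := by
      rw [← geometric, pow_mul, pow_mul, hζ.pow_eq_one, one_pow, one_pow, map_one, one_mul]
    rw [geom_sum_eq ratio_ne_one, ratio_pow, sub_self, zero_div]

variable {E : Type*} [SeminormedAddCommGroup E] [InnerProductSpace 𝕜 E]

theorem sum_norm_sq_sum_pow_smul (hζ : IsPrimitiveRoot ζ n) (y : ℕ → E) :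
    ∑ a ∈ range n, ‖∑ b ∈ range n, ζ ^ (a * b) • y b‖ ^ 2 = n * ∑ b ∈ range n, ‖y b‖ ^ 2 := by
  have parseval : ∑ a ∈ range n, inner 𝕜 (∑ b ∈ range n, ζ ^ (a * b) • y b)
      (∑ c ∈ range n, ζ ^ (a * c) • y c) = n * ∑ b ∈ range n, inner 𝕜 (y b) (y b) := calc
    _ = ∑ a ∈ range n, ∑ b ∈ range n, ∑ c ∈ range n,
          conj (ζ ^ (a * b)) * ζ ^ (a * c) * inner 𝕜 (y b) (y c) := by
      simp only [sum_inner, inner_smul_left, inner_sum, inner_smul_right, mul_sum, mul_assoc]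
      refine sum_congr rfl fun a _ ↦ ?_
      rw [sum_comm]
      simp only [mul_left_comm]
    _ = ∑ b ∈ range n, ∑ c ∈ range n,
          (∑ a ∈ range n, conj (ζ ^ (a * b)) * ζ ^ (a * c)) * inner 𝕜 (y b) (y c) := by
      rw [sum_comm]
      refine sum_congr rfl fun b _ ↦ ?_
      rw [sum_comm]
      simp only [sum_mul]
    _ = ∑ b ∈ range n, ∑ c ∈ range n, (if b = c then (n : 𝕜) else 0) * inner 𝕜 (y b) (y c) :=
      sum_congr rfl fun b hb ↦ sum_congr rfl fun c hc ↦ by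
        rw [sum_conj_pow_mul_pow hζ (mem_range.1 hb) (mem_range.1 hc)]
    _ = n * ∑ b ∈ range n, inner 𝕜 (y b) (y b) := by
      rw [mul_sum]
      refine sum_congr rfl fun b hb ↦ ?_
      simp only [ite_mul, zero_mul, sum_ite_eq, if_pos hb]
  simp only [inner_self_eq_norm_sq_to_K] at parseval
  exact_mod_cast parseval

theorem sum_norm_sum_pow_smul_le (hζ : IsPrimitiveRoot ζ n) {y : ℕ → E} {r : ℝ}
    (hy : ∀ b, ‖y b‖ ≤ r) :
    ∑ a ∈ range n, ‖∑ b ∈ range n, ζ ^ (a * b) • y b‖ ≤ n * √n * r := by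
  have hr : 0 ≤ r := (norm_nonneg _).trans (hy 0)
  refine le_of_sq_le_sq ?_ (by positivity)
  calc (∑ a ∈ range n, ‖∑ b ∈ range n, ζ ^ (a * b) • y b‖) ^ 2
      ≤ n * ∑ a ∈ range n, ‖∑ b ∈ range n, ζ ^ (a * b) • y b‖ ^ 2 := by
        simpa only [card_range] using sq_sum_le_card_mul_sum_sq (s := range n)
          (f := fun a ↦ ‖∑ b ∈ range n, ζ ^ (a * b) • y b‖)
    _ = n * (n * ∑ b ∈ range n, ‖y b‖ ^ 2) := by rw [sum_norm_sq_sum_pow_smul hζ]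
    _ ≤ n * (n * ∑ _b ∈ range n, r ^ 2) := by gcongr; exact hy _
    _ = (n * √n * r) ^ 2 := by
      rw [sum_const, card_range, nsmul_eq_mul, mul_pow, mul_pow, Real.sq_sqrt n.cast_nonneg]
      ring

end DiscreteFourier

section Contractions

theorem norm_pow_apply_le_of_norm_le_one {𝕜 E : Type*} [NontriviallyNormedField 𝕜]
    [SeminormedAddCommGroup E] [NormedSpace 𝕜 E] {T : E →L[𝕜] E} (hT : ‖T‖ ≤ 1) (k : ℕ) (x : E) :
    ‖(T ^ k) x‖ ≤ ‖x‖ := by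
  induction k with
  | zero => simp
  | succ k ih =>
    rw [pow_succ', mul_apply_eq_comp]
    exact (T.le_of_opNorm_le hT _).trans (by simpa using ih)

theorem norm_le_one_of_adjoint_mul_self_eq_one {𝕜 H : Type*} [RCLike 𝕜]
    [NormedAddCommGroup H] [InnerProductSpace 𝕜 H] [CompleteSpace H] {T : H →L[𝕜] H}
    (hT : ContinuousLinearMap.adjoint T * T = 1) : ‖T‖ ≤ 1 :=
  T.opNorm_le_bound zero_le_one fun x ↦
    ((T.norm_map_iff_adjoint_comp_self.2 hT x).trans (one_mul _).symm).le

variable {𝕜 E : Type*} [RCLike 𝕜] [SeminormedAddCommGroup E] [InnerProductSpace 𝕜 E]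
  {U V : E →L[𝕜] E} {ζ : 𝕜} {n : ℕ}

theorem norm_sum_pow_mul_sum_pow_le (hU : ‖U‖ ≤ 1) (hV : ‖V‖ ≤ 1) (hζ : IsPrimitiveRoot ζ n)
    (hUV : U * V = ζ • (V * U)) :
    ‖(∑ b ∈ range n, U ^ b) * ∑ a ∈ range n, V ^ a‖ ≤ n * √n := by
  refine ContinuousLinearMap.opNorm_le_bound _ (by positivity) fun x ↦ ?_
  calc ‖((∑ b ∈ range n, U ^ b) * ∑ a ∈ range n, V ^ a) x‖
      = ‖∑ a ∈ range n, (V ^ a) (∑ b ∈ range n, ζ ^ (a * b) • (U ^ b) x)‖ := by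
        simp only [sum_pow_mul_sum_pow_of_mul_eq_smul_mul hUV, _root_.sum_apply,
          mul_apply_eq_comp, smul_apply]
    _ ≤ ∑ a ∈ range n, ‖∑ b ∈ range n, ζ ^ (a * b) • (U ^ b) x‖ :=
      norm_sum_le_of_le _ fun a _ ↦ norm_pow_apply_le_of_norm_le_one hV a _
    _ ≤ n * √n * ‖x‖ := sum_norm_sum_pow_smul_le hζ fun b ↦
      norm_pow_apply_le_of_norm_le_one hU b x

theorem stmt15_general (hn : n ≠ 0) (hU : ‖U‖ ≤ 1) (hV : ‖V‖ ≤ 1) (hζ : IsPrimitiveRoot ζ n)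
    (hUV : U * V = ζ • (V * U)) :
    ‖((n : 𝕜)⁻¹ • ∑ a ∈ range n, U ^ a) * ((n : 𝕜)⁻¹ • ∑ a ∈ range n, V ^ a)‖ ≤
      (n : ℝ) ^ (-(1 / 2 : ℝ)) := by
  calc ‖((n : 𝕜)⁻¹ • ∑ a ∈ range n, U ^ a) * ((n : 𝕜)⁻¹ • ∑ a ∈ range n, V ^ a)‖
      = (n : ℝ)⁻¹ * (n : ℝ)⁻¹ * ‖(∑ a ∈ range n, U ^ a) * ∑ a ∈ range n, V ^ a‖ := by
        rw [smul_mul_smul_comm, norm_smul, norm_mul, norm_inv, RCLike.norm_natCast]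
    _ ≤ (n : ℝ)⁻¹ * (n : ℝ)⁻¹ * (n * √n) := by
      gcongr
      exact norm_sum_pow_mul_sum_pow_le hU hV hζ hUV
    _ = (√n)⁻¹ := by
      field_simp
      rw [Real.sq_sqrt n.cast_nonneg]
    _ = (n : ℝ) ^ (-(1 / 2 : ℝ)) := by
      rw [Real.rpow_neg n.cast_nonneg, Real.sqrt_eq_rpow]

end Contractions

theorem stmt15 :
    ∀ (p : ℕ), Nat.Prime p →
    ∀ (E : Type) [NormedAddCommGroup E] [InnerProductSpace ℂ E] [FiniteDimensional ℂ E]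
      (U V : E →L[ℂ] E) (ζ : ℂ),
      -- U and V are unitary
      ContinuousLinearMap.adjoint U * U = 1 → U * ContinuousLinearMap.adjoint U = 1 →
      ContinuousLinearMap.adjoint V * V = 1 → V * ContinuousLinearMap.adjoint V = 1 →
      -- of order dividing p
      U ^ p = 1 → V ^ p = 1 →
      -- commutation by a nontrivial p-th root of unity
      ζ ^ p = 1 → ζ ≠ 1 → U * V = ζ • (V * U) →
      ‖((p : ℂ)⁻¹ • ∑ a ∈ Finset.range p, U ^ a) *
          ((p : ℂ)⁻¹ • ∑ a ∈ Finset.range p, V ^ a)‖ ≤ (p : ℝ) ^ (-(1 / 2 : ℝ)) := by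
  intro p hp E _ _ _ U V ζ hU _ hV _ _ _ hζp hζ1 hUV
  have : Fact p.Prime := ⟨hp⟩
  exact stmt15_general hp.ne_zero (norm_le_one_of_adjoint_mul_self_eq_one hU)
    (norm_le_one_of_adjoint_mul_self_eq_one hV)
    (IsPrimitiveRoot.iff_orderOf.2 (orderOf_eq_prime hζp hζ1)) hUV
end
end

section
/- Let P_1,…,P_N be orthogonal projections on a finite-dimensional complex Hilbert space, and let 0 ≤ α < 1 and δ ∈ (0,1]. Suppose that for at least δ·N² ordered pairs (j,ℓ) ∈ {1,…,N}² one has ‖P_j P_ℓ‖_op ≤ α. Then ‖(1/N)·Σ_{j=1}^N P_j‖_op ≤ 1 − (δ/2)·(1−α). In particular (two-projection case), if P, Q are orthogonal projections with s = ‖PQ‖_op, then the largest eigenvalue of (P+Q)/2 is at most (1+s)/2. -/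
open Finset
open scoped Classical

noncomputable section

/-!
Let `P`, `Q` be orthogonal projections and `s = ‖P Q‖`. Since `⟪P x, Q x⟫ = ⟪P x, (P Q) (Q x)⟫`,
the cross term in `‖P x + Q x‖²` is at most `2 s ‖P x‖ ‖Q x‖`, so
`‖P x + Q x‖² ≤ (1 + s) (‖P x‖² + ‖Q x‖²)`. On the other hand,
`‖P x‖² + ‖Q x‖² = re ⟪P x + Q x, x⟫ ≤ ‖P x + Q x‖ ‖x‖`. Together these give `‖P + Q‖ ≤ 1 + s`,
which bounds the eigenvalues of `(P + Q) / 2`.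

The average of `P₁, …, P_N` is also the average of the `N²` midpoints `(P_j + P_l) / 2`. Each of
these has norm at most `1`, and at most `(1 + α) / 2` when `‖P_j P_l‖ ≤ α`.
-/

section Average

variable {V ι : Type*} [Fintype ι]

theorem sum_prod_add_eq_nsmul_sum [AddCommMonoid V] (v : ι → V) :
    ∑ q : ι × ι, (v q.1 + v q.2) = (2 * Fintype.card ι) • ∑ j, v j := by
  simp only [Fintype.sum_prod_type, sum_add_distrib, sum_const, card_univ]
  rw [← smul_sum, two_mul, add_nsmul]

variable [SeminormedAddCommGroup V] {v : ι → V} {s : Finset (ι × ι)} {α δ : ℝ}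

theorem two_mul_card_mul_norm_sum_le (𝕜 : Type*) [RCLike 𝕜] [NormedSpace 𝕜 V]
    (hv : ∀ j, ‖v j‖ ≤ 1) (hs : ∀ q ∈ s, ‖v q.1 + v q.2‖ ≤ 1 + α) :
    2 * Fintype.card ι * ‖∑ j, v j‖ ≤ 2 * (Fintype.card ι : ℝ) ^ 2 - #s * (1 - α) := by
  have pair_le (q : ι × ι) : ‖v q.1 + v q.2‖ ≤ 2 - if q ∈ s then 1 - α else 0 := by
    split_ifs with hq
    · linarith [hs q hq]
    · linarith [norm_add_le_of_le (hv q.1) (hv q.2)]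
  calc 2 * Fintype.card ι * ‖∑ j, v j‖
    _ = ‖∑ q : ι × ι, (v q.1 + v q.2)‖ := by
      rw [sum_prod_add_eq_nsmul_sum, ← Nat.cast_smul_eq_nsmul 𝕜, norm_smul, RCLike.norm_natCast,
        Nat.cast_mul, Nat.cast_two]
    _ ≤ ∑ q : ι × ι, ‖v q.1 + v q.2‖ := norm_sum_le _ _
    _ ≤ ∑ q, (2 - if q ∈ s then 1 - α else 0) := sum_le_sum fun q _ ↦ pair_le q
    _ = 2 * (Fintype.card ι : ℝ) ^ 2 - #s * (1 - α) := by
      simp only [sum_sub_distrib, sum_const, sum_ite_mem, univ_inter, card_univ,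
        Fintype.card_prod, nsmul_eq_mul, Nat.cast_mul]
      ring

theorem norm_average_le_of_norm_add_le [Nonempty ι] (𝕜 : Type*) [RCLike 𝕜] [NormedSpace 𝕜 V]
    (hα : α ≤ 1) (hv : ∀ j, ‖v j‖ ≤ 1) (hs : ∀ q ∈ s, ‖v q.1 + v q.2‖ ≤ 1 + α)
    (hcard : δ * (Fintype.card ι : ℝ) ^ 2 ≤ #s) :
    ‖(Fintype.card ι : 𝕜)⁻¹ • ∑ j, v j‖ ≤ 1 - δ / 2 * (1 - α) := by
  have hpos : (0 : ℝ) < Fintype.card ι := Nat.cast_pos.mpr Fintype.card_pos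
  have hgain := mul_le_mul_of_nonneg_right hcard (sub_nonneg.mpr hα)
  have hsum := two_mul_card_mul_norm_sum_le 𝕜 hv hs
  rw [norm_smul, norm_inv, RCLike.norm_natCast, inv_mul_le_iff₀ hpos]
  refine le_of_mul_le_mul_left ?_ (mul_pos two_pos hpos)
  linarith

end Average

theorem norm_le_opNorm_of_hasEigenvalue {𝕜 E : Type*} [NontriviallyNormedField 𝕜]
    [NormedAddCommGroup E] [NormedSpace 𝕜 E] {T : E →L[𝕜] E} {μ : 𝕜}
    (hμ : Module.End.HasEigenvalue (T : E →ₗ[𝕜] E) μ) : ‖μ‖ ≤ ‖T‖ := by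
  obtain ⟨x, hx⟩ := hμ.exists_hasEigenvector
  have hTx : T x = μ • x := hx.apply_eq_smul
  refine le_of_mul_le_mul_right ?_ (norm_pos_iff.mpr hx.2)
  rw [← norm_smul, ← hTx]
  exact T.le_opNorm x

namespace SymmetricProjection

variable {𝕜 E : Type*} [RCLike 𝕜] [NormedAddCommGroup E] [InnerProductSpace 𝕜 E]
  {P Q : E →L[𝕜] E}

theorem opNorm_le_one (hP : (P : E →ₗ[𝕜] E).IsSymmetricProjection) : ‖P‖ ≤ 1 := by
  obtain ⟨U, _, hU⟩ := LinearMap.isSymmetricProjection_iff_eq_coe_starProjection.mp hP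
  rw [ContinuousLinearMap.coe_injective hU]
  exact U.starProjection_norm_le

theorem apply_apply (hP : (P : E →ₗ[𝕜] E).IsSymmetricProjection) (x : E) : P (P x) = P x :=
  LinearMap.congr_fun hP.isIdempotentElem.eq x

theorem re_inner_apply_self (hP : (P : E →ₗ[𝕜] E).IsSymmetricProjection) (x : E) :
    RCLike.re (inner 𝕜 (P x) x) = ‖P x‖ ^ 2 := by
  have hinner : inner 𝕜 (P (P x)) x = inner 𝕜 (P x) (P x) := hP.isSymmetric (P x) x
  rw [← apply_apply hP, hinner, apply_apply hP, inner_self_eq_norm_sq]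

theorem re_inner_apply_apply_le (hP : (P : E →ₗ[𝕜] E).IsSymmetricProjection)
    (hQ : (Q : E →ₗ[𝕜] E).IsSymmetricProjection) (x : E) :
    RCLike.re (inner 𝕜 (P x) (Q x)) ≤ ‖P * Q‖ * (‖P x‖ * ‖Q x‖) := by
  have hinner : inner 𝕜 (P x) (Q x) = inner 𝕜 (P x) ((P * Q) (Q x)) :=
    calc inner 𝕜 (P x) (Q x)
      _ = inner 𝕜 (P (P x)) (Q (Q x)) := by rw [apply_apply hP, apply_apply hQ]
      _ = inner 𝕜 (P x) (P (Q (Q x))) := hP.isSymmetric (P x) (Q (Q x))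
  calc RCLike.re (inner 𝕜 (P x) (Q x))
    _ ≤ ‖P x‖ * ‖(P * Q) (Q x)‖ := hinner ▸ re_inner_le_norm _ _
    _ ≤ ‖P x‖ * (‖P * Q‖ * ‖Q x‖) := by gcongr; exact (P * Q).le_opNorm (Q x)
    _ = ‖P * Q‖ * (‖P x‖ * ‖Q x‖) := mul_left_comm _ _ _

theorem norm_add_apply_sq_le (hP : (P : E →ₗ[𝕜] E).IsSymmetricProjection)
    (hQ : (Q : E →ₗ[𝕜] E).IsSymmetricProjection) (x : E) :
    ‖P x + Q x‖ ^ 2 ≤ (1 + ‖P * Q‖) * (‖P x‖ ^ 2 + ‖Q x‖ ^ 2) := by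
  have hcross := re_inner_apply_apply_le hP hQ x
  have hamgm := mul_le_mul_of_nonneg_left (two_mul_le_add_sq ‖P x‖ ‖Q x‖) (norm_nonneg (P * Q))
  rw [norm_add_sq (𝕜 := 𝕜)]
  linarith

theorem norm_sq_add_norm_sq_le (hP : (P : E →ₗ[𝕜] E).IsSymmetricProjection)
    (hQ : (Q : E →ₗ[𝕜] E).IsSymmetricProjection) (x : E) :
    ‖P x‖ ^ 2 + ‖Q x‖ ^ 2 ≤ ‖P x + Q x‖ * ‖x‖ := by
  rw [← re_inner_apply_self hP, ← re_inner_apply_self hQ, ← map_add, ← inner_add_left]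
  exact re_inner_le_norm _ _

theorem opNorm_add_le (hP : (P : E →ₗ[𝕜] E).IsSymmetricProjection)
    (hQ : (Q : E →ₗ[𝕜] E).IsSymmetricProjection) : ‖P + Q‖ ≤ 1 + ‖P * Q‖ := by
  refine ContinuousLinearMap.opNorm_le_bound _ (by positivity) fun x ↦ ?_
  rw [add_apply]
  rcases (norm_nonneg (P x + Q x)).eq_or_lt with hzero | hpos
  · rw [← hzero]
    positivity
  refine le_of_mul_le_mul_left ?_ hpos
  calc ‖P x + Q x‖ * ‖P x + Q x‖
    _ = ‖P x + Q x‖ ^ 2 := (sq _).symm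
    _ ≤ (1 + ‖P * Q‖) * (‖P x‖ ^ 2 + ‖Q x‖ ^ 2) := norm_add_apply_sq_le hP hQ x
    _ ≤ (1 + ‖P * Q‖) * (‖P x + Q x‖ * ‖x‖) := by
      gcongr
      exact norm_sq_add_norm_sq_le hP hQ x
    _ = ‖P x + Q x‖ * ((1 + ‖P * Q‖) * ‖x‖) := mul_left_comm _ _ _

theorem norm_average_le {ι : Type*} [Fintype ι] [Nonempty ι] {P : ι → E →L[𝕜] E} {α δ : ℝ}
    (hα : α ≤ 1) (hP : ∀ j, (P j : E →ₗ[𝕜] E).IsSymmetricProjection)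
    (hcard : δ * (Fintype.card ι : ℝ) ^ 2 ≤ #{q : ι × ι | ‖P q.1 * P q.2‖ ≤ α}) :
    ‖(Fintype.card ι : 𝕜)⁻¹ • ∑ j, P j‖ ≤ 1 - δ / 2 * (1 - α) := by
  refine norm_average_le_of_norm_add_le 𝕜 hα (fun j ↦ opNorm_le_one (hP j)) (fun q hq ↦ ?_) hcard
  calc ‖P q.1 + P q.2‖
    _ ≤ 1 + ‖P q.1 * P q.2‖ := opNorm_add_le (hP q.1) (hP q.2)
    _ ≤ 1 + α := by gcongr; exact (mem_filter.mp hq).2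

theorem norm_eigenvalue_midpoint_le (hP : (P : E →ₗ[𝕜] E).IsSymmetricProjection)
    (hQ : (Q : E →ₗ[𝕜] E).IsSymmetricProjection) {μ : 𝕜}
    (hμ : Module.End.HasEigenvalue (((2 : 𝕜)⁻¹ • (P + Q) : E →L[𝕜] E) : E →ₗ[𝕜] E) μ) :
    ‖μ‖ ≤ (1 + ‖P * Q‖) / 2 := by
  calc ‖μ‖
    _ ≤ ‖(2 : 𝕜)⁻¹ • (P + Q)‖ := norm_le_opNorm_of_hasEigenvalue hμ
    _ = ‖P + Q‖ / 2 := by rw [norm_smul, norm_inv, RCLike.norm_two, inv_mul_eq_div]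
    _ ≤ (1 + ‖P * Q‖) / 2 := by gcongr; exact opNorm_add_le hP hQ

end SymmetricProjection

theorem stmt16_general (𝕜 E : Type*) [RCLike 𝕜] [NormedAddCommGroup E] [InnerProductSpace 𝕜 E] :
    (∀ N : ℕ, 1 ≤ N → ∀ (P : Fin N → (E →L[𝕜] E)) (α δ : ℝ), α ≤ 1 →
      (∀ j, (P j : E →ₗ[𝕜] E).IsSymmetricProjection) →
      δ * (N : ℝ) ^ 2 ≤ #{q : Fin N × Fin N | ‖P q.1 * P q.2‖ ≤ α} →
      ‖(N : 𝕜)⁻¹ • ∑ j, P j‖ ≤ 1 - δ / 2 * (1 - α)) ∧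
    (∀ P Q : E →L[𝕜] E, (P : E →ₗ[𝕜] E).IsSymmetricProjection →
      (Q : E →ₗ[𝕜] E).IsSymmetricProjection → ∀ μ : 𝕜,
      Module.End.HasEigenvalue (((2 : 𝕜)⁻¹ • (P + Q) : E →L[𝕜] E) : E →ₗ[𝕜] E) μ →
      ‖μ‖ ≤ (1 + ‖P * Q‖) / 2) := by
  refine ⟨fun N hN P α δ hα hP hcard ↦ ?_,
    fun P Q hP hQ μ hμ ↦ SymmetricProjection.norm_eigenvalue_midpoint_le hP hQ hμ⟩
  have : Nonempty (Fin N) := ⟨⟨0, hN⟩⟩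
  simpa only [Fintype.card_fin] using
    SymmetricProjection.norm_average_le hα hP (by simpa only [Fintype.card_fin] using hcard)

theorem stmt16 :
    ∀ (E : Type) [NormedAddCommGroup E] [InnerProductSpace ℂ E] [FiniteDimensional ℂ E],
      -- main claim: averages of projections with many almost-orthogonal pairs
      (∀ (N : ℕ), 1 ≤ N → ∀ (P : Fin N → (E →L[ℂ] E)) (α δ : ℝ),
        0 ≤ α → α < 1 → 0 < δ → δ ≤ 1 →
        (∀ j, P j * P j = P j) →
        (∀ j, ContinuousLinearMap.adjoint (P j) = P j) →
        δ * (N : ℝ) ^ 2 ≤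
          ((Finset.univ.filter
            (fun q : Fin N × Fin N => ‖P q.1 * P q.2‖ ≤ α)).card : ℝ) →
        ‖(N : ℂ)⁻¹ • ∑ j, P j‖ ≤ 1 - δ / 2 * (1 - α)) ∧
      -- two-projection case: largest eigenvalue of (P+Q)/2 is at most (1+s)/2
      (∀ (P Q : E →L[ℂ] E),
        P * P = P → ContinuousLinearMap.adjoint P = P →
        Q * Q = Q → ContinuousLinearMap.adjoint Q = Q →
        ∀ μ : ℝ,
          Module.End.HasEigenvalue
            (((2 : ℂ)⁻¹ • (P + Q) : E →L[ℂ] E) : E →ₗ[ℂ] E) (μ : ℂ) →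
          μ ≤ (1 + ‖P * Q‖) / 2) := by
  intro E _ _ _
  have isProj {P : E →L[ℂ] E} (hmul : P * P = P) (hadj : ContinuousLinearMap.adjoint P = P) :
      (P : E →ₗ[ℂ] E).IsSymmetricProjection :=
    ContinuousLinearMap.isStarProjection_iff_isSymmetricProjection.mp ⟨hmul, hadj⟩
  obtain ⟨average_le, eigenvalue_le⟩ := stmt16_general ℂ E
  exact ⟨fun N hN P α δ _ hα _ _ hmul hadj ↦
      average_le N hN P α δ hα.le fun j ↦ isProj (hmul j) (hadj j),
    fun P Q hP hPadj hQ hQadj μ hμ ↦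
      (Complex.re_le_norm μ).trans (eigenvalue_le P Q (isProj hP hPadj) (isProj hQ hQadj) μ hμ)⟩
end
end

section
/- Let p be an odd prime, W an F_p-vector space of dimension 2m ≥ 2 with nondegenerate alternating form ω, and H the associated Heisenberg group. Fix β ∈ (1/p, 1). Let a_1,…,a_N ∈ H with a_j = (v_j, z_j), let μ_W = (1/N)·Σ_j δ_{v_j}, and assume μ_W(L) ≤ β for every hyperplane (codimension-one subspace) L ≤ W. Let ν = (1/N)·Σ_{j=1}^N u_{⟨a_j⟩}, where u_{⟨a⟩} is the uniform measure on the cyclic subgroup generated by a, and let K = (1/2)(R_ν + L_ν), where R_ν f(x) = Σ_g ν(g)f(xg) and L_ν f(x) = Σ_g ν(g)f(gx). Then K, which is self-adjoint on L²(H, uniform), satisfies: every eigenvalue of K on the orthogonal complement of the constant functions is at most 1 − γ_{p,β} in absolute value, where γ_{p,β} = min{ 1−β , ((1−β)²/2)·(1 − p^{−1/2}) } > 0; in particular the spectral gap of K is at least γ_{p,β}. -/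
noncomputable section

/-- Data of a bilinear form on `W` turning `W × ZMod p` into a Heisenberg group. -/
class HeisData (p : ℕ) (W : Type*) [Fact (Nat.Prime p)] [AddCommGroup W]
    [Module (ZMod p) W] where
  ω : W →ₗ[ZMod p] W →ₗ[ZMod p] ZMod p

/-- The Heisenberg group structure on `W × ZMod p`:
`(v,z)·(w,t) = (v+w, z+t+ω(v,w)/2)`. -/
instance heisGroup (p : ℕ) (W : Type*) [Fact (Nat.Prime p)] [AddCommGroup W]
    [Module (ZMod p) W] [HeisData p W] : Group (W × ZMod p) where
  mul x y := (x.1 + y.1, x.2 + y.2 + (2 : ZMod p)⁻¹ * HeisData.ω x.1 y.1)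
  one := ((0 : W), (0 : ZMod p))
  inv x := (-x.1, -x.2 + (2 : ZMod p)⁻¹ * HeisData.ω x.1 x.1)
  mul_assoc a b c := by
    refine Prod.ext ?_ ?_
    · show a.1 + b.1 + c.1 = a.1 + (b.1 + c.1)
      exact add_assoc _ _ _
    · show a.2 + b.2 + (2 : ZMod p)⁻¹ * HeisData.ω a.1 b.1 + c.2 +
          (2 : ZMod p)⁻¹ * HeisData.ω (a.1 + b.1) c.1 =
        a.2 + (b.2 + c.2 + (2 : ZMod p)⁻¹ * HeisData.ω b.1 c.1) +
          (2 : ZMod p)⁻¹ * HeisData.ω a.1 (b.1 + c.1)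
      simp only [map_add, LinearMap.add_apply]
      ring
  one_mul a := by
    refine Prod.ext ?_ ?_
    · show 0 + a.1 = a.1; simp
    · show 0 + a.2 + (2 : ZMod p)⁻¹ * HeisData.ω 0 a.1 = a.2
      simp
  mul_one a := by
    refine Prod.ext ?_ ?_
    · show a.1 + 0 = a.1; simp
    · show a.2 + 0 + (2 : ZMod p)⁻¹ * HeisData.ω a.1 0 = a.2
      simp
  inv_mul_cancel a := by
    refine Prod.ext ?_ ?_
    · show -a.1 + a.1 = 0; simp
    · show -a.2 + (2 : ZMod p)⁻¹ * HeisData.ω a.1 a.1 + a.2 +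
          (2 : ZMod p)⁻¹ * HeisData.ω (-a.1) a.1 = 0
      simp only [map_neg, LinearMap.neg_apply]
      ring

open scoped Classical

/-- The measure `ν = (1/N) Σ_j u_{⟨a_j⟩}`, where `u_{⟨a⟩}` is uniform on the
cyclic subgroup generated by `a`. -/
def heisNu {H : Type*} [Group H] {N : ℕ} (a : Fin N → H) : H → ℝ := fun g =>
  (1 / (N : ℝ)) * ∑ j,
    (if g ∈ Subgroup.zpowers (a j) then (Nat.card (Subgroup.zpowers (a j)) : ℝ)⁻¹ else 0)

/-- The kernel `K = (R_ν + L_ν)/2` as a matrix: `K x y = (ν(x⁻¹y) + ν(yx⁻¹))/2`. -/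
def heisK {H : Type*} [Group H] {N : ℕ} (a : Fin N → H) : H → H → ℝ := fun x y =>
  (heisNu a (x⁻¹ * y) + heisNu a (y * x⁻¹)) / 2

/-!
Averaging over the right translates by a subgroup is an orthogonal projection of `L²(H)`, and
inversion of `H` exchanges left and right translations, so `K` is an average of orthogonal
projections and its eigenvalues are nonnegative. Let `f` be an eigenfunction of mean zero.

If the average of `f` over the centre does not vanish, then `f` correlates with a nontrivial
character of `W`. Such a character is itself an eigenfunction of `K`, whose eigenvalue is the
proportion of the `v_j` lying on a hyperplane, hence at most `β`.

If the average of `f` over the centre vanishes, let `P_j` be the projection attached to `⟨a_j⟩`.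
When `ω(v_j, v_k) ≠ 0`, conjugating by `⟨a_j⟩` moves a nontrivial element of `⟨a_k⟩` through a whole
central coset, so `P_j f` is orthogonal to its translates by `⟨a_k⟩ \ {1}` and
`‖P_k P_j f‖² = p⁻¹ ‖P_j f‖²`. Two projections at such an angle satisfy
`‖P_j f‖² + ‖P_k f‖² ≤ (1 + p^(-1/2)) ‖f‖²`, and at least the proportion `(1 - β)²` of all pairs
`(j, k)` is of this kind.
-/

open Matrix

section Averages

variable {G : Type*} [Group G] [Fintype G]

/-- The operator averaging a function on `G` over the left cosets `x * S`, that is, the orthogonal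
projection of `L²(G)` onto the functions invariant under right translation by `S`. -/
def rightAverage (S : Subgroup G) (f : G → ℝ) (x : G) : ℝ :=
  (Nat.card S : ℝ)⁻¹ * ∑ s : S, f (x * s)

variable {S : Subgroup G}

theorem rightAverage_mul_right (f : G → ℝ) (x : G) {s : G} (hs : s ∈ S) :
    rightAverage S f (x * s) = rightAverage S f x := by
  simp only [rightAverage, mul_assoc]
  congr 1
  exact Equiv.sum_comp (Equiv.mulLeft (⟨s, hs⟩ : S)) fun t : S => f (x * t)

theorem rightAverage_idem (S : Subgroup G) (f : G → ℝ) :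
    rightAverage S (rightAverage S f) = rightAverage S f := by
  funext x
  have hS : (Nat.card S : ℝ) ≠ 0 := Nat.cast_ne_zero.2 Nat.card_pos.ne'
  calc rightAverage S (rightAverage S f) x
      = (Nat.card S : ℝ)⁻¹ * ∑ _s : S, rightAverage S f x := by
        simp only [rightAverage.eq_1 S (rightAverage S f), rightAverage_mul_right f x,
          SetLike.coe_mem]
    _ = rightAverage S f x := by simp [hS, ← Nat.card_eq_fintype_card]

theorem rightAverage_dotProduct_eq_sum (S : Subgroup G) (f g : G → ℝ) :
    rightAverage S f ⬝ᵥ g = (Nat.card S : ℝ)⁻¹ * ∑ s : S, ∑ x, f (x * s) * g x := by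
  simp only [dotProduct, rightAverage, mul_assoc, ← Finset.mul_sum, Finset.sum_mul]
  rw [Finset.sum_comm]

theorem rightAverage_dotProduct (S : Subgroup G) (f g : G → ℝ) :
    rightAverage S f ⬝ᵥ g = f ⬝ᵥ rightAverage S g := by
  rw [dotProduct_comm f, rightAverage_dotProduct_eq_sum, rightAverage_dotProduct_eq_sum,
    ← Equiv.sum_comp (Equiv.inv S)]
  congr 1
  refine Finset.sum_congr rfl fun s _ => ?_
  rw [← Equiv.sum_comp (Equiv.mulRight (s : G))]
  simp [mul_comm]

theorem rightAverage_dotProduct_self (S : Subgroup G) (f : G → ℝ) :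
    rightAverage S f ⬝ᵥ f = rightAverage S f ⬝ᵥ rightAverage S f := by
  rw [← rightAverage_dotProduct, rightAverage_idem]

theorem rightAverage_dotProduct_self_nonneg (S : Subgroup G) (f : G → ℝ) :
    0 ≤ rightAverage S f ⬝ᵥ f := by
  rw [rightAverage_dotProduct_self]
  exact dotProduct_star_self_nonneg (rightAverage S f)

theorem rightAverage_dotProduct_self_le (S : Subgroup G) (f : G → ℝ) :
    rightAverage S f ⬝ᵥ f ≤ f ⬝ᵥ f := by
  have hnonneg : 0 ≤ (f - rightAverage S f) ⬝ᵥ (f - rightAverage S f) :=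
    dotProduct_star_self_nonneg (f - rightAverage S f)
  simp only [sub_dotProduct, dotProduct_sub, dotProduct_comm f (rightAverage S f),
    ← rightAverage_dotProduct_self] at hnonneg
  linarith

theorem rightAverage_comm {A Z : Subgroup G} (hAZ : ∀ a ∈ A, ∀ z ∈ Z, Commute a z)
    (f : G → ℝ) :
    rightAverage Z (rightAverage A f) = rightAverage A (rightAverage Z f) := by
  funext x
  simp only [rightAverage, ← Finset.mul_sum]
  rw [Finset.sum_comm, mul_left_comm]
  simp only [mul_assoc, (hAZ _ (SetLike.coe_mem _) _ (SetLike.coe_mem _)).eq]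

theorem rightAverage_comp_inv_eq_zero {Z : Subgroup G} (hZ : Z ≤ Subgroup.center G) {f : G → ℝ}
    (hf : rightAverage Z f = 0) : rightAverage Z (fun x => f x⁻¹) = 0 := by
  funext x
  refine Eq.trans ?_ (congrFun hf x⁻¹)
  rw [rightAverage, rightAverage, ← Equiv.sum_comp (Equiv.inv Z)]
  simp [Subgroup.mem_center_iff.1 (hZ (SetLike.coe_mem _)) x⁻¹]

/- Substituting `x ↦ x * a` leaves the correlation of `u` with its translate by `g` unchanged, but
turns `g` into `g * z`; averaging over `z` therefore annihilates it. -/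
theorem sum_mul_right_mul_eq_zero {A Z : Subgroup G} {g : G} {u : G → ℝ}
    (hgen : ∀ z ∈ Z, ∃ a ∈ A, a * g = g * z * a) (hinv : ∀ x, ∀ a ∈ A, u (x * a) = u x)
    (hZ : rightAverage Z u = 0) : ∑ x, u (x * g) * u x = 0 := by
  have hshift : ∀ z : Z, ∑ x, u (x * g * z) * u x = ∑ x, u (x * g) * u x := by
    rintro ⟨z, hz⟩
    obtain ⟨a, ha, hag⟩ := hgen z hz
    rw [← Equiv.sum_comp (Equiv.mulRight a) fun x => u (x * g) * u x]
    refine Finset.sum_congr rfl fun x _ => ?_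
    rw [Equiv.coe_mulRight, hinv x a ha, mul_assoc x a g, hag, ← mul_assoc x, hinv _ a ha,
      ← mul_assoc]
  have hcard : (Nat.card Z : ℝ) ≠ 0 := Nat.cast_ne_zero.2 Nat.card_pos.ne'
  have hsum : ∀ x, ∑ z : Z, u (x * z) = 0 := fun x =>
    (mul_eq_zero.1 (congrFun hZ x)).resolve_left (inv_ne_zero hcard)
  have hmul : (Nat.card Z : ℝ) * ∑ x, u (x * g) * u x = 0 :=
    calc (Nat.card Z : ℝ) * ∑ x, u (x * g) * u x
        = ∑ z : Z, ∑ x, u (x * g * z) * u x := by simp [hshift]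
      _ = ∑ x, (∑ z : Z, u (x * g * z)) * u x := by
          rw [Finset.sum_comm]
          simp only [Finset.sum_mul]
      _ = 0 := by simp [hsum]
  exact (mul_eq_zero.1 hmul).resolve_left hcard

theorem rightAverage_dotProduct_self_of_sum_mul_right_mul_eq_zero {u : G → ℝ}
    (hu : ∀ s ∈ S, s ≠ 1 → ∑ x, u (x * s) * u x = 0) :
    rightAverage S u ⬝ᵥ u = (Nat.card S : ℝ)⁻¹ * (u ⬝ᵥ u) := by
  rw [rightAverage_dotProduct_eq_sum, Fintype.sum_eq_single 1]
  · simp [dotProduct]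
  · exact fun s hs => hu s s.2 (by simpa using hs)

end Averages

section Projections

open scoped RealInnerProductSpace

theorem norm_sq_add_norm_sq_le_of_inner_le {E : Type*} [NormedAddCommGroup E]
    [InnerProductSpace ℝ E] {f u v : E} {r : ℝ} (hr : 0 ≤ r) (hu : ⟪u, f⟫ = ‖u‖ ^ 2)
    (hv : ⟪v, f⟫ = ‖v‖ ^ 2) (huv : ⟪u, v⟫ ≤ r * (‖u‖ * ‖v‖)) :
    ‖u‖ ^ 2 + ‖v‖ ^ 2 ≤ (1 + r) * ‖f‖ ^ 2 := by
  have hsum : ‖u + v‖ ^ 2 ≤ (1 + r) * (‖u‖ ^ 2 + ‖v‖ ^ 2) := by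
    rw [norm_add_sq_real]
    nlinarith [two_mul_le_add_sq ‖u‖ ‖v‖]
  have hexpand : ‖u + v - (1 + r) • f‖ ^ 2 =
      ‖u + v‖ ^ 2 - 2 * (1 + r) * (‖u‖ ^ 2 + ‖v‖ ^ 2) + (1 + r) ^ 2 * ‖f‖ ^ 2 := by
    rw [norm_sub_sq_real, real_inner_smul_right, inner_add_left, hu, hv, norm_smul, mul_pow,
      Real.norm_eq_abs, sq_abs]
    ring
  refine le_of_mul_le_mul_left ?_ (by linarith : 0 < 1 + r)
  linarith [sq_nonneg ‖u + v - (1 + r) • f‖]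

theorem dotProduct_self_add_dotProduct_self_le {ι : Type*} [Fintype ι] {f u v : ι → ℝ} {r : ℝ}
    (hr : 0 ≤ r) (hu : u ⬝ᵥ f = u ⬝ᵥ u) (hv : v ⬝ᵥ f = v ⬝ᵥ v)
    (huv : (u ⬝ᵥ v) ^ 2 ≤ r ^ 2 * (u ⬝ᵥ u) * (v ⬝ᵥ v)) :
    u ⬝ᵥ u + v ⬝ᵥ v ≤ (1 + r) * (f ⬝ᵥ f) := by
  have hinner : ∀ g h : ι → ℝ, g ⬝ᵥ h = ⟪WithLp.toLp 2 g, WithLp.toLp 2 h⟫ := fun g h => by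
    rw [EuclideanSpace.inner_toLp_toLp, star_trivial, dotProduct_comm]
  simp only [hinner, real_inner_self_eq_norm_sq] at hu hv huv ⊢
  refine norm_sq_add_norm_sq_le_of_inner_le hr hu hv (le_of_sq_le_sq ?_ (by positivity))
  linarith

end Projections

section PairCounting

variable {ι : Type*} [Fintype ι]

theorem two_mul_card_mul_sum_le {Q : ι → ℝ} {M δ : ℝ} (s : Finset (ι × ι)) (hQ : ∀ j, Q j ≤ M)
    (hs : ∀ x ∈ s, Q x.1 + Q x.2 ≤ 2 * M - δ) :
    2 * Fintype.card ι * ∑ j, Q j ≤ 2 * M * Fintype.card ι ^ 2 - δ * s.card := by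
  calc 2 * Fintype.card ι * ∑ j, Q j = ∑ x : ι × ι, (Q x.1 + Q x.2) := by
        simp only [Finset.sum_add_distrib, Fintype.sum_prod_type, Finset.sum_const,
          Finset.card_univ, nsmul_eq_mul, ← Finset.mul_sum]
        ring
    _ ≤ ∑ x : ι × ι, (2 * M - if x ∈ s then δ else 0) := by
        refine Finset.sum_le_sum fun x _ => ?_
        split_ifs with hx
        · exact hs x hx
        · linarith [hQ x.1, hQ x.2]
    _ = 2 * M * Fintype.card ι ^ 2 - δ * s.card := by
        simp only [Finset.sum_sub_distrib, Finset.sum_const, Finset.card_univ, Fintype.card_prod,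
          Finset.sum_ite_mem, Finset.univ_inter, nsmul_eq_mul, Nat.cast_mul]
        ring

variable {K W : Type*} [CommRing K] [DecidableEq K] [AddCommGroup W] [Module K W]
  {v : ι → W} {β : ℝ}

theorem one_sub_mul_card_le_card_filter_ne_zero {ξ : W →ₗ[K] K}
    (hξ : ((Finset.univ.filter fun j => ξ (v j) = 0).card : ℝ) ≤ β * Fintype.card ι) :
    (1 - β) * Fintype.card ι ≤ (Finset.univ.filter fun j => ξ (v j) ≠ 0).card := by
  have hsplit := Finset.card_filter_add_card_filter_not (s := (Finset.univ : Finset ι))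
    (fun j => ξ (v j) = 0)
  rw [Finset.card_univ, ← Nat.cast_inj (R := ℝ), Nat.cast_add] at hsplit
  simp only [ne_eq]
  linarith

theorem one_sub_sq_mul_card_sq_le_card_filter_ne_zero [Nontrivial W] {B : W →ₗ[K] W →ₗ[K] K}
    (hB : B.SeparatingLeft) (hβ : β ≤ 1)
    (hv : ∀ ξ : W →ₗ[K] K, ξ ≠ 0 →
      ((Finset.univ.filter fun j => ξ (v j) = 0).card : ℝ) ≤ β * Fintype.card ι) :
    (1 - β) ^ 2 * Fintype.card ι ^ 2 ≤
      (Finset.univ.filter fun x : ι × ι => B (v x.1) (v x.2) ≠ 0).card := by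
  have hrow : ∀ w : W, w ≠ 0 →
      (1 - β) * Fintype.card ι ≤ (Finset.univ.filter fun k => B w (v k) ≠ 0).card :=
    fun w hw => one_sub_mul_card_le_card_filter_ne_zero <| hv (B w) fun h =>
      hw (hB w fun y => by rw [h, LinearMap.zero_apply])
  have hnonzero : (1 - β) * Fintype.card ι ≤ (Finset.univ.filter fun j => v j ≠ 0).card := by
    obtain ⟨w, hw⟩ := exists_ne (0 : W)
    refine (hrow w hw).trans (Nat.cast_le.2 (Finset.card_le_card ?_))
    exact Finset.monotone_filter_right _ fun j _ hj hvj => hj (by rw [hvj, map_zero])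
  have hpos : 0 ≤ (1 - β) * Fintype.card ι := mul_nonneg (by linarith) (Nat.cast_nonneg _)
  calc (1 - β) ^ 2 * (Fintype.card ι : ℝ) ^ 2
      = ((1 - β) * Fintype.card ι) * ((1 - β) * Fintype.card ι) := by ring
    _ ≤ (Finset.univ.filter fun j => v j ≠ 0).card * ((1 - β) * Fintype.card ι) :=
        mul_le_mul_of_nonneg_right hnonzero hpos
    _ = ∑ j with v j ≠ 0, (1 - β) * Fintype.card ι := by rw [Finset.sum_const, nsmul_eq_mul]
    _ ≤ ∑ j with v j ≠ 0, ((Finset.univ.filter fun k => B (v j) (v k) ≠ 0).card : ℝ) :=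
        Finset.sum_le_sum fun j hj => hrow _ (Finset.mem_filter.1 hj).2
    _ ≤ ∑ j, ((Finset.univ.filter fun k => B (v j) (v k) ≠ 0).card : ℝ) :=
        Finset.sum_le_sum_of_subset_of_nonneg (Finset.filter_subset _ _)
          fun _ _ _ => Nat.cast_nonneg _
    _ = (Finset.univ.filter fun x : ι × ι => B (v x.1) (v x.2) ≠ 0).card := by
        simp only [Finset.card_filter, Fintype.sum_prod_type, Nat.cast_sum]

end PairCounting

section Characters

/- Fourier inversion, with the characters of `W` parametrised by the pairing `B`. -/
theorem eq_zero_of_forall_sum_mul_addChar_eq_zero {K V W : Type*} [CommRing K]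
    [AddCommGroup V] [Module K V] [Finite V] [AddCommGroup W] [Module K W] [Fintype W]
    {ψ : AddChar K ℂ} (hψ : ψ.IsPrimitive) {B : V →ₗ[K] W →ₗ[K] K} (hB : B.SeparatingRight)
    {F : W → ℂ} (hF : ∀ w, ∑ v, F v * ψ (B w v) = 0) : F = 0 := by
  have := Fintype.ofFinite V
  have horth : ∀ u : W, ∑ w, ψ (B w u) = if u = 0 then (Fintype.card V : ℂ) else 0 := by
    intro u
    have hiff : ψ.compAddMonoidHom (B.flip u).toAddMonoidHom = 0 ↔ u = 0 := by
      refine ⟨fun h => hB u fun w => ?_, by rintro rfl; ext; simp⟩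
      by_contra hw
      refine hψ hw (DFunLike.ext _ _ fun k => ?_)
      simpa [AddChar.mulShift_apply, mul_comm] using DFunLike.congr_fun h (k • w)
    simpa [hiff] using AddChar.sum_eq_ite (ψ.compAddMonoidHom (B.flip u).toAddMonoidHom)
  funext v
  have hinv : F v * Fintype.card V = 0 :=
    calc F v * Fintype.card V = ∑ u, F u * ∑ w, ψ (B w (u - v)) := by
          simp only [horth, sub_eq_zero]
          simp
      _ = ∑ w, (∑ u, F u * ψ (B w u)) * ψ (-B w v) := by
          simp only [Finset.mul_sum, Finset.sum_mul, map_sub, sub_eq_add_neg (B _ _),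
            AddChar.map_add_eq_mul, mul_assoc]
          exact Finset.sum_comm
      _ = 0 := by simp [hF]
  exact (mul_eq_zero.1 hinv).resolve_right (Nat.cast_ne_zero.2 Fintype.card_ne_zero)

theorem average_zpowers_char_inv {G : Type*} [Group G] [Fintype G] (χ : G →* ℂ) (a : G) :
    (Nat.card (Subgroup.zpowers a) : ℝ)⁻¹ • ∑ s : Subgroup.zpowers a, χ (s : G)⁻¹ =
      if χ a = 1 then 1 else 0 := by
  have htriv : χ.comp (Subgroup.zpowers a).subtype = 1 ↔ χ a = 1 := by
    rw [← MonoidHom.mem_ker, ← Subgroup.zpowers_le]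
    exact ⟨fun h s hs => MonoidHom.mem_ker.2 (DFunLike.congr_fun h ⟨s, hs⟩),
      fun h => MonoidHom.ext fun s => h s.2⟩
  have hsum := sum_hom_units (χ.comp (Subgroup.zpowers a).subtype)
  rw [← Equiv.sum_comp (Equiv.inv _)] at hsum
  have hcard : (Fintype.card (Subgroup.zpowers a) : ℂ) ≠ 0 :=
    Nat.cast_ne_zero.2 Fintype.card_ne_zero
  simp only [htriv, MonoidHom.comp_apply, Equiv.inv_apply, Subgroup.subtype_apply,
    InvMemClass.coe_inv] at hsum
  rw [hsum]
  split_ifs <;> simp [hcard]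

end Characters

section Kernel

variable {G : Type*} [Group G] [Fintype G] {N : ℕ}

theorem sum_heisNu_smul (a : Fin N → G) {E : Type*} [AddCommGroup E] [Module ℝ E] (F : G → E) :
    ∑ g, heisNu a g • F g = (1 / (N : ℝ)) • ∑ j,
      (Nat.card (Subgroup.zpowers (a j)) : ℝ)⁻¹ • ∑ s : Subgroup.zpowers (a j), F s := by
  simp only [heisNu, mul_smul, Finset.sum_smul, ite_smul, zero_smul, ← Finset.smul_sum]
  rw [Finset.sum_comm]
  simp only [← Finset.sum_filter, ← Finset.smul_sum]
  congr! 3 with j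
  exact Finset.sum_subtype _ (by simp) F

theorem sum_heisNu_inv_mul_mul (a : Fin N → G) (f : G → ℝ) (x : G) :
    ∑ y, heisNu a (x⁻¹ * y) * f y =
      (1 / (N : ℝ)) * ∑ j, rightAverage (Subgroup.zpowers (a j)) f x := by
  rw [← Equiv.sum_comp (Equiv.mulLeft x)]
  simpa [rightAverage] using sum_heisNu_smul a fun g => f (x * g)

/-- The quadratic form `⟨R_ν f, f⟩` of right convolution by `ν = heisNu a`. -/
def rightEnergy (a : Fin N → G) (f : G → ℝ) : ℝ :=
  (1 / (N : ℝ)) * ∑ j, rightAverage (Subgroup.zpowers (a j)) f ⬝ᵥ f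

theorem rightEnergy_nonneg (a : Fin N → G) (f : G → ℝ) : 0 ≤ rightEnergy a f :=
  mul_nonneg (by positivity)
    (Finset.sum_nonneg fun _ _ => rightAverage_dotProduct_self_nonneg _ f)

theorem rightEnergy_eq_sum (a : Fin N → G) (f : G → ℝ) :
    rightEnergy a f = ∑ x, ∑ y, heisNu a (x⁻¹ * y) * f y * f x := by
  simp only [← Finset.sum_mul, sum_heisNu_inv_mul_mul, rightEnergy, dotProduct]
  rw [Finset.sum_comm, Finset.mul_sum]
  simp only [Finset.sum_mul, mul_assoc]

/- Inversion of the group exchanges left and right convolution. -/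
theorem heisK_dotProduct_self (a : Fin N → G) (f : G → ℝ) :
    (fun x => ∑ y, heisK a x y * f y) ⬝ᵥ f =
      (rightEnergy a f + rightEnergy a fun x => f x⁻¹) / 2 := by
  have hleft : (rightEnergy a fun x => f x⁻¹) = ∑ x, ∑ y, heisNu a (y * x⁻¹) * f y * f x := by
    rw [rightEnergy_eq_sum, Finset.sum_comm, ← Equiv.sum_comp (Equiv.inv G)]
    refine Finset.sum_congr rfl fun x _ => ?_
    rw [← Equiv.sum_comp (Equiv.inv G)]
    refine Finset.sum_congr rfl fun y _ => ?_
    simp only [Equiv.inv_apply, inv_inv]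
    ring
  rw [hleft, rightEnergy_eq_sum, ← Finset.sum_add_distrib, Finset.sum_div]
  refine Finset.sum_congr rfl fun x _ => ?_
  rw [← Finset.sum_add_distrib, Finset.sum_div, Finset.sum_mul]
  exact Finset.sum_congr rfl fun y _ => by rw [heisK]; ring

theorem sum_heisNu_smul_char_inv (a : Fin N → G) (χ : G →* ℂ) :
    ∑ g, heisNu a g • χ g⁻¹ =
      (((Finset.univ.filter fun j => χ (a j) = 1).card / N : ℝ) : ℂ) := by
  rw [sum_heisNu_smul a fun g => χ g⁻¹]
  simp only [average_zpowers_char_inv, Finset.sum_boole]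
  rw [Complex.real_smul]
  push_cast
  ring

theorem sum_heisK_smul_char (a : Fin N → G) (χ : G →* ℂ) (y : G) :
    ∑ x, heisK a x y • χ x =
      (((Finset.univ.filter fun j => χ (a j) = 1).card / N : ℝ) : ℂ) * χ y := by
  have hright : ∑ x, heisNu a (x⁻¹ * y) • χ x = (∑ g, heisNu a g • χ g⁻¹) * χ y := by
    rw [← Equiv.sum_comp ((Equiv.inv G).trans (Equiv.mulLeft y)), Finset.sum_mul]
    simp [mul_left_comm, mul_comm]
  have hleft : ∑ x, heisNu a (y * x⁻¹) • χ x = (∑ g, heisNu a g • χ g⁻¹) * χ y := by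
    rw [← Equiv.sum_comp ((Equiv.inv G).trans (Equiv.mulRight y)), Finset.sum_mul]
    simp [mul_assoc]
  calc ∑ x, heisK a x y • χ x
      = (∑ x, heisNu a (x⁻¹ * y) • χ x + ∑ x, heisNu a (y * x⁻¹) • χ x) / 2 := by
        rw [← Finset.sum_add_distrib, Finset.sum_div]
        refine Finset.sum_congr rfl fun x _ => ?_
        simp only [heisK, Complex.real_smul]
        push_cast
        ring
    _ = _ := by rw [hright, hleft, add_self_div_two, sum_heisNu_smul_char_inv]

section Eigenvalue

variable {a : Fin N → G} {f : G → ℝ} {c : ℝ}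

theorem heisK_eigenvalue_eq_of_char (hK : (fun x => ∑ y, heisK a x y * f y) = c • f)
    {χ : G →* ℂ} (hχ : ∑ x, f x • χ x ≠ 0) :
    c = (Finset.univ.filter fun j => χ (a j) = 1).card / N := by
  rw [← Complex.ofReal_inj]
  refine mul_right_cancel₀ hχ ?_
  calc (c : ℂ) * ∑ x, f x • χ x = ∑ x, (∑ y, heisK a x y * f y) • χ x := by
        simp only [congrFun hK, Pi.smul_apply, smul_assoc, ← Finset.smul_sum]
        rw [Complex.real_smul]
    _ = ∑ y, f y • ∑ x, heisK a x y • χ x := by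
        simp only [Finset.sum_smul, Finset.smul_sum, smul_smul, mul_comm]
        rw [Finset.sum_comm]
    _ = _ := by
        simp only [sum_heisK_smul_char, ← mul_smul_comm, Finset.mul_sum]

theorem heisK_eigenvalue_mul_dotProduct_self
    (hK : (fun x => ∑ y, heisK a x y * f y) = c • f) :
    c * (f ⬝ᵥ f) = (rightEnergy a f + rightEnergy a fun x => f x⁻¹) / 2 := by
  rw [← heisK_dotProduct_self, hK, smul_dotProduct, smul_eq_mul]

theorem heisK_eigenvalue_nonneg (hK : (fun x => ∑ y, heisK a x y * f y) = c • f) (hf : f ≠ 0) :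
    0 ≤ c := by
  have hpos : 0 < f ⬝ᵥ f := dotProduct_star_self_pos_iff.2 hf
  refine nonneg_of_mul_nonneg_left ?_ hpos
  rw [heisK_eigenvalue_mul_dotProduct_self hK]
  linarith [rightEnergy_nonneg a f, rightEnergy_nonneg a fun x => f x⁻¹]

theorem heisK_eigenvalue_le_of_rightEnergy_le (hK : (fun x => ∑ y, heisK a x y * f y) = c • f)
    (hf : f ≠ 0) {t : ℝ} (hright : rightEnergy a f ≤ t * (f ⬝ᵥ f))
    (hleft : (rightEnergy a fun x => f x⁻¹) ≤ t * ((fun x => f x⁻¹) ⬝ᵥ fun x => f x⁻¹)) :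
    c ≤ t := by
  have hnorm : ((fun x => f x⁻¹) ⬝ᵥ fun x => f x⁻¹) = f ⬝ᵥ f :=
    Equiv.sum_comp (Equiv.inv G) fun x => f x * f x
  rw [hnorm] at hleft
  have hpos : 0 < f ⬝ᵥ f := dotProduct_star_self_pos_iff.2 hf
  refine le_of_mul_le_mul_right ?_ hpos
  rw [heisK_eigenvalue_mul_dotProduct_self hK]
  linarith

end Eigenvalue

end Kernel

section Heisenberg

variable {p : ℕ} [Fact p.Prime] {W : Type*} [AddCommGroup W] [Module (ZMod p) W] [HeisData p W]

theorem heis_mul_def (x y : W × ZMod p) :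
    x * y = (x.1 + y.1, x.2 + y.2 + (2 : ZMod p)⁻¹ * HeisData.ω x.1 y.1) := rfl

theorem heis_pow (hω : (HeisData.ω (p := p) (W := W)).IsAlt) (a : W × ZMod p) (n : ℕ) :
    a ^ n = (n • a.1, n • a.2) := by
  induction n with
  | zero => rw [pow_zero, zero_smul, zero_smul]; rfl
  | succ n ih => simp [pow_succ, ih, heis_mul_def, hω.self_eq_zero, add_smul]

theorem heis_card_zpowers (hω : (HeisData.ω (p := p) (W := W)).IsAlt) {a : W × ZMod p}
    (ha : a.1 ≠ 0) : Nat.card (Subgroup.zpowers a) = p := by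
  have hpow : a ^ p = 1 := by
    rw [heis_pow hω, ← Nat.cast_smul_eq_nsmul (ZMod p), ← Nat.cast_smul_eq_nsmul (ZMod p),
      CharP.cast_eq_zero, zero_smul, zero_smul]
    rfl
  rw [Nat.card_zpowers, orderOf_eq_prime hpow]
  rintro rfl
  exact ha rfl

theorem heis_mul_eq_mul_commutator_mul (hp : p ≠ 2)
    (hω : (HeisData.ω (p := p) (W := W)).IsAlt) (a g : W × ZMod p) :
    a * g = g * (0, HeisData.ω a.1 g.1) * a := by
  have : NeZero (2 : ZMod p) := ⟨Ring.two_ne_zero (by rwa [ZMod.ringChar_zmod_n])⟩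
  refine Prod.ext (by simp [heis_mul_def, add_comm]) ?_
  simp only [heis_mul_def, map_zero, mul_zero, add_zero, ← hω.neg a.1 g.1]
  linear_combination HeisData.ω (p := p) a.1 g.1 * inv_mul_cancel₀ (two_ne_zero (α := ZMod p))

variable (p W) in
/-- The subgroup `{0} × ZMod p` of the Heisenberg group; it is the full centre when `ω` is
nondegenerate. -/
def heisCenter : Subgroup (W × ZMod p) where
  carrier := {x | x.1 = 0}
  one_mem' := rfl
  mul_mem' {x y} hx hy := by simp_all [heis_mul_def]
  inv_mem' {x} hx := neg_eq_zero.2 hx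

theorem heisCenter_le_center : heisCenter p W ≤ Subgroup.center (W × ZMod p) := by
  intro z (hz : z.1 = 0)
  refine Subgroup.mem_center_iff.2 fun x => ?_
  simp [heis_mul_def, hz, add_comm]

theorem exists_mem_zpowers_mul_eq (hp : p ≠ 2) (hω : (HeisData.ω (p := p) (W := W)).IsAlt)
    {a g : W × ZMod p} (hag : HeisData.ω (p := p) a.1 g.1 ≠ 0) {z : W × ZMod p}
    (hz : z ∈ heisCenter p W) : ∃ b ∈ Subgroup.zpowers a, b * g = g * z * b := by
  obtain ⟨v, t⟩ := z
  obtain rfl : v = 0 := hz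
  set n := (t / HeisData.ω (p := p) a.1 g.1).val
  refine ⟨a ^ n, Subgroup.npow_mem_zpowers a n, ?_⟩
  rw [heis_mul_eq_mul_commutator_mul hp hω, heis_pow hω]
  simp [n, hag]

theorem heis_apply_ne_zero_of_mem_zpowers [Finite W] (hω : (HeisData.ω (p := p) (W := W)).IsAlt)
    {a b g : W × ZMod p} (hab : HeisData.ω (p := p) a.1 b.1 ≠ 0) (hg : g ∈ Subgroup.zpowers b)
    (hg1 : g ≠ 1) : HeisData.ω (p := p) a.1 g.1 ≠ 0 := by
  obtain ⟨n, rfl⟩ := mem_powers_iff_mem_zpowers.2 hg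
  simp only [heis_pow hω, ← Nat.cast_smul_eq_nsmul (ZMod p)] at hg1 ⊢
  rw [map_smul, smul_eq_mul]
  refine mul_ne_zero (fun hn => hg1 ?_) hab
  rw [hn, zero_smul, zero_smul]
  rfl

/-- The character `(v, z) ↦ exp (2πi ω(w, v) / p)` of the Heisenberg group. -/
def heisChar (w : W) : W × ZMod p →* ℂ where
  toFun x := ZMod.stdAddChar (HeisData.ω (p := p) w x.1)
  map_one' := by
    change ZMod.stdAddChar (HeisData.ω (p := p) w 0) = 1
    simp
  map_mul' x y := by simp [heis_mul_def, AddChar.map_add_eq_mul]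

theorem heisChar_apply (w : W) (x : W × ZMod p) :
    heisChar w x = ZMod.stdAddChar (HeisData.ω (p := p) w x.1) := rfl

theorem heisChar_eq_one_iff (w : W) (x : W × ZMod p) :
    heisChar w x = 1 ↔ HeisData.ω (p := p) w x.1 = 0 := by
  rw [heisChar_apply, ← AddChar.map_zero_eq_one (ZMod.stdAddChar (N := p)),
    ZMod.injective_stdAddChar.eq_iff]

variable [Fintype W]

theorem rightAverage_heisCenter_eq_zero {f : W × ZMod p → ℝ} (hf : ∀ v, ∑ z, f (v, z) = 0) :
    rightAverage (heisCenter p W) f = 0 := by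
  funext x
  let e : heisCenter p W ≃ ZMod p :=
    { toFun := fun s => x.2 + s.1.2
      invFun := fun z => ⟨(0, z - x.2), rfl⟩
      left_inv := fun s => Subtype.ext (Prod.ext s.2.symm (add_sub_cancel_left _ _))
      right_inv := fun z => add_sub_cancel _ _ }
  have hmul : ∀ s : heisCenter p W, x * s = (x.1, e s) := by
    rintro ⟨s, hs : s.1 = 0⟩
    simp [e, heis_mul_def, hs]
  simp [rightAverage, hmul, Equiv.sum_comp e fun z => f (x.1, z), hf]

theorem exists_sum_smul_heisChar_ne_zero
    (hnd : (HeisData.ω (p := p) (W := W)).SeparatingRight) {f : W × ZMod p → ℝ}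
    (hf : rightAverage (heisCenter p W) f ≠ 0) : ∃ w, ∑ x, f x • heisChar w x ≠ 0 := by
  contrapose! hf
  have hzero : (fun v => ∑ z, (f (v, z) : ℂ)) = 0 :=
    eq_zero_of_forall_sum_mul_addChar_eq_zero (ZMod.isPrimitive_stdAddChar p) hnd fun w => by
      simpa [Fintype.sum_prod_type, heisChar_apply, Finset.sum_mul] using hf w
  refine rightAverage_heisCenter_eq_zero fun v => ?_
  have hv : ∑ z, (f (v, z) : ℂ) = 0 := congrFun hzero v
  exact_mod_cast hv

theorem rightAverage_zpowers_dotProduct_self (hp : p ≠ 2)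
    (hω : (HeisData.ω (p := p) (W := W)).IsAlt) {a b : W × ZMod p}
    (hab : HeisData.ω (p := p) a.1 b.1 ≠ 0) {u : W × ZMod p → ℝ}
    (hu : rightAverage (heisCenter p W) u = 0)
    (hinv : ∀ x, ∀ s ∈ Subgroup.zpowers a, u (x * s) = u x) :
    rightAverage (Subgroup.zpowers b) u ⬝ᵥ u = (p : ℝ)⁻¹ * (u ⬝ᵥ u) := by
  have hb : b.1 ≠ 0 := fun hb => hab (by rw [hb, map_zero])
  rw [rightAverage_dotProduct_self_of_sum_mul_right_mul_eq_zero, heis_card_zpowers hω hb]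
  intro g hg hg1
  have hag := heis_apply_ne_zero_of_mem_zpowers hω hab hg hg1
  exact sum_mul_right_mul_eq_zero (fun z hz => exists_mem_zpowers_mul_eq hp hω hag hz) hinv hu

theorem rightAverage_zpowers_dotProduct_self_add_le (hp : p ≠ 2)
    (hω : (HeisData.ω (p := p) (W := W)).IsAlt) {a b : W × ZMod p}
    (hab : HeisData.ω (p := p) a.1 b.1 ≠ 0) {f : W × ZMod p → ℝ}
    (hf : rightAverage (heisCenter p W) f = 0) {r : ℝ} (hr : 0 ≤ r) (hrp : r ^ 2 = (p : ℝ)⁻¹) :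
    rightAverage (Subgroup.zpowers a) f ⬝ᵥ f + rightAverage (Subgroup.zpowers b) f ⬝ᵥ f ≤
      (1 + r) * (f ⬝ᵥ f) := by
  set u := rightAverage (Subgroup.zpowers a) f with hu_def
  set v := rightAverage (Subgroup.zpowers b) f with hv_def
  have huf : u ⬝ᵥ f = u ⬝ᵥ u := rightAverage_dotProduct_self _ f
  have hvf : v ⬝ᵥ f = v ⬝ᵥ v := rightAverage_dotProduct_self _ f
  have hu : rightAverage (heisCenter p W) u = 0 := by
    rw [hu_def, rightAverage_comm fun x _ z hz =>
      Subgroup.mem_center_iff.1 (heisCenter_le_center hz) x, hf]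
    funext x
    simp [rightAverage]
  have hproj : rightAverage (Subgroup.zpowers b) u ⬝ᵥ rightAverage (Subgroup.zpowers b) u =
      r ^ 2 * (u ⬝ᵥ u) := by
    rw [hrp, ← rightAverage_dotProduct_self]
    exact rightAverage_zpowers_dotProduct_self hp hω hab hu fun x s hs =>
      rightAverage_mul_right f x hs
  have huv_eq : u ⬝ᵥ v = rightAverage (Subgroup.zpowers b) u ⬝ᵥ v := by
    rw [rightAverage_dotProduct _ u v, hv_def, rightAverage_idem]
  have huv : (u ⬝ᵥ v) ^ 2 ≤ r ^ 2 * (u ⬝ᵥ u) * (v ⬝ᵥ v) := by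
    rw [huv_eq, ← hproj]
    simpa only [dotProduct, sq] using
      Finset.sum_mul_sq_le_sq_mul_sq Finset.univ (rightAverage (Subgroup.zpowers b) u) v
  rw [huf, hvf]
  exact dotProduct_self_add_dotProduct_self_le hr huf hvf huv

theorem rightEnergy_le [Nontrivial W] (hp : p ≠ 2) (hω : (HeisData.ω (p := p) (W := W)).IsAlt)
    (hnd : (HeisData.ω (p := p) (W := W)).SeparatingLeft) {β : ℝ} (hβ : β ≤ 1) {N : ℕ}
    (hN : 1 ≤ N) {a : Fin N → W × ZMod p}
    (ha : ∀ ξ : W →ₗ[ZMod p] ZMod p, ξ ≠ 0 →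
      ((Finset.univ.filter fun j => ξ (a j).1 = 0).card : ℝ) / N ≤ β)
    {f : W × ZMod p → ℝ} (hf : rightAverage (heisCenter p W) f = 0) :
    rightEnergy a f ≤ (1 - (1 - β) ^ 2 / 2 * (1 - (p : ℝ) ^ (-(1 / 2 : ℝ)))) * (f ⬝ᵥ f) := by
  set r : ℝ := (p : ℝ) ^ (-(1 / 2 : ℝ)) with hr_def
  have hp1 : (1 : ℝ) ≤ p := by exact_mod_cast (Fact.out : p.Prime).one_le
  have hr0 : 0 ≤ r := by positivity
  have hr1 : r ≤ 1 := Real.rpow_le_one_of_one_le_of_nonpos hp1 (by norm_num)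
  have hrp : r ^ 2 = (p : ℝ)⁻¹ := by
    rw [hr_def, ← Real.rpow_mul_natCast (by positivity), ← Real.rpow_neg_one]
    norm_num
  have hN0 : (0 : ℝ) < N := by exact_mod_cast hN
  have hgap : 0 ≤ (1 - r) * (f ⬝ᵥ f) :=
    mul_nonneg (by linarith) (dotProduct_star_self_nonneg f)
  have hpairs := one_sub_sq_mul_card_sq_le_card_filter_ne_zero (v := fun j => (a j).1) hnd hβ
    fun ξ hξ => by simpa [div_le_iff₀ hN0] using ha ξ hξ
  have hsum := two_mul_card_mul_sum_le (δ := (1 - r) * (f ⬝ᵥ f))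
    (Finset.univ.filter fun x : Fin N × Fin N => HeisData.ω (p := p) (a x.1).1 (a x.2).1 ≠ 0)
    (fun j => rightAverage_dotProduct_self_le (Subgroup.zpowers (a j)) f) fun x hx => by
      linarith [rightAverage_zpowers_dotProduct_self_add_le hp hω (Finset.mem_filter.1 hx).2
        hf hr0 hrp]
  rw [Fintype.card_fin] at hpairs hsum
  rw [rightEnergy, one_div, inv_mul_le_iff₀ hN0]
  refine le_of_mul_le_mul_left ?_ (mul_pos two_pos hN0)
  linarith [mul_le_mul_of_nonneg_left hpairs hgap]

theorem stmt17_general [Nontrivial W] (hp : p ≠ 2) (hω : (HeisData.ω (p := p) (W := W)).IsAlt)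
    (hnd : (HeisData.ω (p := p) (W := W)).SeparatingLeft) {β : ℝ} (hβ : β ≤ 1) {N : ℕ}
    (hN : 1 ≤ N) {a : Fin N → W × ZMod p}
    (ha : ∀ ξ : W →ₗ[ZMod p] ZMod p, ξ ≠ 0 →
      ((Finset.univ.filter fun j => ξ (a j).1 = 0).card : ℝ) / N ≤ β)
    {f : W × ZMod p → ℝ} {c : ℝ} (hK : (fun x => ∑ y, heisK a x y * f y) = c • f)
    (hsum : ∑ x, f x = 0) (hf : f ≠ 0) :
    0 ≤ c ∧ c ≤ 1 - min (1 - β) ((1 - β) ^ 2 / 2 * (1 - (p : ℝ) ^ (-(1 / 2 : ℝ)))) := by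
  refine ⟨heisK_eigenvalue_nonneg hK hf, ?_⟩
  by_cases hcenter : rightAverage (heisCenter p W) f = 0
  · refine le_trans ?_ (sub_le_sub_left (min_le_right _ _) 1)
    exact heisK_eigenvalue_le_of_rightEnergy_le hK hf
      (rightEnergy_le hp hω hnd hβ hN ha hcenter)
      (rightEnergy_le hp hω hnd hβ hN ha
        (rightAverage_comp_inv_eq_zero heisCenter_le_center hcenter))
  · have hnd' := (hω.isRefl.nondegenerate_iff_separatingLeft.2 hnd).2
    obtain ⟨w, hw⟩ := exists_sum_smul_heisChar_ne_zero hnd' hcenter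
    have hωw : HeisData.ω (p := p) w ≠ 0 := fun h => hw <| by
      simp [heisChar_apply, h, ← Complex.ofReal_sum, hsum]
    have hc := heisK_eigenvalue_eq_of_char hK hw
    simp only [heisChar_eq_one_iff] at hc
    linarith [ha _ hωw, min_le_left (1 - β) ((1 - β) ^ 2 / 2 * (1 - (p : ℝ) ^ (-(1 / 2 : ℝ))))]

end Heisenberg

theorem stmt17 :
    ∀ (p : ℕ) [Fact (Nat.Prime p)], p ≠ 2 →
    ∀ (W : Type) [AddCommGroup W] [Module (ZMod p) W] [Fintype W] [DecidableEq W]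
      [HeisData p W] (m : ℕ),
      1 ≤ m → Module.finrank (ZMod p) W = 2 * m →
      -- ω is alternating and nondegenerate
      (∀ v : W, HeisData.ω (p := p) v v = 0) →
      (∀ v : W, (∀ w : W, HeisData.ω (p := p) v w = 0) → v = 0) →
      ∀ β : ℝ, 1 / (p : ℝ) < β → β < 1 →
      ∀ (N : ℕ), 1 ≤ N → ∀ a : Fin N → W × ZMod p,
        -- the empirical measure of the horizontal parts puts mass at most β
        -- on every hyperplane (= kernel of a nonzero linear functional)
        (∀ ξ : W →ₗ[ZMod p] ZMod p, ξ ≠ 0 →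
          ((Finset.univ.filter fun j => ξ (a j).1 = 0).card : ℝ) / N ≤ β) →
        -- every eigenvalue of K on the orthogonal complement of the constants
        -- is at most 1 − γ_{p,β} in absolute value
        ∀ (f : W × ZMod p → ℝ) (c : ℝ),
          (fun x => ∑ y, heisK a x y * f y) = c • f →
          (∑ x, f x) = 0 → f ≠ 0 →
          |c| ≤ 1 - min (1 - β) ((1 - β) ^ 2 / 2 * (1 - (p : ℝ) ^ (-(1 / 2 : ℝ)))) := by
  intro p _ hp W _ _ _ _ _ m hm hdim hω hnd β _ hβ N hN a ha f c hK hsum hf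
  have : Nontrivial W := Module.nontrivial_of_finrank_pos (R := ZMod p) (by omega)
  obtain ⟨hc0, hc⟩ := stmt17_general hp hω hnd hβ.le hN ha hK hsum hf
  rwa [abs_of_nonneg hc0]
end
end
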